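/- Fix n ≥ 3, p > 2 with p < n, and set κ = (n−p)/(p−1) > 0. Let u be a positive p-harmonic function on B_5(0) ⊂ ℝⁿ with u(0) = 1, and let z with |z| ≤ 2 and 0 < r ≤ 1 be such that 0 ∉ closure(B_r(z)). Then inf_{B_r(z)} u ≤ c(p,n)·r^{−κ}, where c(p,n) depends only on p and n. -/

import Mathlib

open Metric Set
open scoped RealInnerProductSpace

section Helpers

open MeasureTheory Filter Topology ENNReal



abbrev EE (n : ℕ) := EuclideanSpace ℝ (Fin n)

lemma cont_pair {n : ℕ} (p q : ℝ≥0∞) [Fact (1 ≤ p)] [Fact (1 ≤ q)] [Fact (p ≠ ∞)]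
    [HolderConjugate q p] (F g : EE n → EE n) (hF : MemLp F q volume) (hg : MemLp g p volume) :
    Continuous fun t : EE n => ∫ x, ⟪F x, g (x - t)⟫ := by
  have key : ∀ t : EE n, ∫ x, ⟪F x, g (x - t)⟫ =
      (innerSL ℝ (E := EE n)).lpPairing volume q p (hF.toLp F)
        ((DomAddAct.mk (-t)) +ᵥ (hg.toLp g)) := by
    intro t
    rw [DomAddAct.mk_vadd_toLp, ContinuousLinearMap.lpPairing_eq_integral]
    apply integral_congr_ae
    filter_upwards [hF.coeFn_toLp, (hg.comp_measurePreserving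
      (measurePreserving_vadd (-t) (volume : Measure (EE n)))).coeFn_toLp] with x h1 h2
    rw [h1]
    refine Eq.trans ?_ (congrArg (innerSL ℝ (F x)) h2).symm
    simp [sub_eq_neg_add]
  simp_rw [key]
  refine (ContinuousLinearMap.continuous _).comp ?_
  have : Continuous fun t : EE n => DomAddAct.mk (-t) :=
    DomAddAct.continuous_mk.comp continuous_neg
  exact this.vadd continuous_const

lemma grad_inner {n : ℕ} (u : EE n → ℝ) (x v : EE n) : ⟪v, gradient u x⟫ = fderiv ℝ u x v := by
  rw [real_inner_comm, inner_gradient_left]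

lemma norm_grad {n : ℕ} (u : EE n → ℝ) (x : EE n) : ‖gradient u x‖ = ‖fderiv ℝ u x‖ := by
  simp [gradient]

lemma meas_grad {n : ℕ} (u : EE n → ℝ) : Measurable (gradient u) := by
  unfold gradient
  exact (LinearIsometryEquiv.continuous _).measurable.comp (measurable_fderiv ℝ u)

lemma moll_deriv {n : ℕ} (ρ w : EE n → ℝ) (hρ : ContDiff ℝ 1 ρ) (hρc : HasCompactSupport ρ)
    (hw : Differentiable ℝ w) (hg : Integrable (gradient w)) (x v : EE n) :
    fderiv ℝ (convolution ρ w (ContinuousLinearMap.lsmul ℝ ℝ) volume) x v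
      = ∫ t, ρ t * ⟪v, gradient w (x - t)⟫ := by
  have hwi : LocallyIntegrable w volume := hw.continuous.locallyIntegrable
  rw [(hρc.hasFDerivAt_convolution_left (ContinuousLinearMap.lsmul ℝ ℝ) hρ hwi x).fderiv]
  have hcd : Continuous (fderiv ℝ ρ) := hρ.continuous_fderiv (by norm_num)
  have hdc : HasCompactSupport (fderiv ℝ ρ) := hρc.fderiv ℝ
  have hwx : Differentiable ℝ (fun t => w (x - t)) := hw.comp (differentiable_const x |>.sub differentiable_id)
  have hfw : ∀ t, fderiv ℝ (fun t => w (x - t)) t v = - ⟪v, gradient w (x - t)⟫ := by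
    intro t
    have h1 : HasFDerivAt (fun t => w (x - t)) ((fderiv ℝ w (x-t)).comp (-(ContinuousLinearMap.id ℝ (EE n)))) t := by
      have := (hw (x - t)).hasFDerivAt.comp t ((hasFDerivAt_id t).const_sub x)
      exact this
    rw [h1.fderiv, grad_inner]
    simp
  have hgi : Integrable (fun t => gradient w (x - t)) := hg.comp_sub_left x
  obtain ⟨C, hC⟩ := hρc.exists_bound_of_continuous hρ.continuous
  have e1 : Integrable (fun t => fderiv ℝ ρ t v * w (x - t)) := by
    apply Continuous.integrable_of_hasCompactSupport
    · exact (hcd.clm_apply continuous_const).mul hwx.continuous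
    · apply HasCompactSupport.mul_right
      exact hdc.comp_left (g := fun L : EE n →L[ℝ] ℝ => L v) (by simp)
  have e2 : Integrable (fun t => ρ t * ⟪v, gradient w (x - t)⟫) := by
    refine Integrable.bdd_mul (c := C) (hgi.const_inner v) hρ.continuous.aestronglyMeasurable ?_
    exact Eventually.of_forall hC
  have e3 : Integrable (fun t => ρ t * w (x - t)) := by
    apply Continuous.integrable_of_hasCompactSupport
    · exact hρ.continuous.mul hwx.continuous
    · exact hρc.mul_right
  have ibp := integral_mul_fderiv_eq_neg_fderiv_mul_of_integrable (μ := volume) (v := v) (f := ρ) (g := fun t => w (x - t))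
    e1 (by simp_rw [hfw]; simpa using e2.neg) e3 (fun x _ => (hρ.differentiable (by norm_num)) x) (fun t _ => hwx t)
  simp_rw [hfw] at ibp
  simp only [mul_neg, integral_neg, neg_inj] at ibp
  rw [ibp]
  unfold convolution
  rw [ContinuousLinearMap.integral_apply]
  · simp
  · have : ConvolutionExistsAt (fderiv ℝ ρ) w x ((ContinuousLinearMap.lsmul ℝ ℝ).precompL (EE n)) volume :=
      (hdc.convolutionExists_left _ hcd hwi) x
    exact this


def Good {n : ℕ} (p : ℝ) (u : EE n → ℝ) : Set (EE n) :=
  {x | ∃ s, IsOpen s ∧ x ∈ s ∧ IntegrableOn (fun y => ‖gradient u y‖ ^ p) s}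

lemma isOpen_Good {n : ℕ} (p : ℝ) (u : EE n → ℝ) : IsOpen (Good p u) := by
  rw [isOpen_iff_forall_mem_open]
  rintro x ⟨s, hs, hx, hi⟩
  exact ⟨s, fun y hy => ⟨s, hs, hy, hi⟩, hs, hx⟩

lemma Good_compact {n : ℕ} (p : ℝ) (u : EE n → ℝ) (K : Set (EE n)) (hK : IsCompact K)
    (h : K ⊆ Good p u) : IntegrableOn (fun y => ‖gradient u y‖ ^ p) K := by
  apply LocallyIntegrableOn.integrableOn_isCompact _ hK
  intro x hx
  obtain ⟨s, hs, hxs, hi⟩ := h hx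
  exact ⟨s, mem_nhdsWithin_of_mem_nhds (hs.mem_nhds hxs), hi⟩

lemma pow_id {p t : ℝ} (hp : 2 < p) (ht : 0 ≤ t) : t ^ (p - 2) * t = t ^ (p - 1) := by
  rw [← Real.rpow_add_one' ht (by linarith)]; congr 1; ring

lemma memLp_F {n : ℕ} (p : ℝ) (hp : 2 < p) (u : EE n → ℝ) (K : Set (EE n)) (hK : MeasurableSet K)
    (h : IntegrableOn (fun y => ‖gradient u y‖ ^ p) K) :
    MemLp (K.indicator fun x => ‖gradient u x‖ ^ (p - 2) • gradient u x)
      (ENNReal.ofReal (p / (p - 1))) volume := by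
  have hq : 0 < p / (p - 1) := div_pos (by linarith) (by linarith)
  have hm : Measurable (K.indicator fun x => ‖gradient u x‖ ^ (p - 2) • gradient u x) := by
    have := meas_grad u
    exact Measurable.indicator (by fun_prop) hK
  rw [← integrable_norm_rpow_iff hm.aestronglyMeasurable (by simpa using hq) (by simp)]
  rw [ENNReal.toReal_ofReal hq.le]
  rw [← integrable_indicator_iff hK] at h
  refine h.congr (Eventually.of_forall fun x => ?_)
  by_cases hx : x ∈ K
  · simp only [hx, indicator_of_mem, norm_smul, Real.norm_eq_abs]
    rw [abs_of_nonneg (Real.rpow_nonneg (norm_nonneg _) _), pow_id hp (norm_nonneg _),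
      ← Real.rpow_mul (norm_nonneg _)]
    congr 1
    field_simp [show p - 1 ≠ 0 by linarith]
  · simp [hx, Real.zero_rpow hq.ne']

lemma grad_zero {n : ℕ} (f : EE n → ℝ) (x : EE n) (hx : x ∉ tsupport f) : gradient f x = 0 := by
  have : fderiv ℝ f x = 0 := by
    by_contra hne
    exact hx (support_fderiv_subset ℝ hne)
  simp [gradient, this]

lemma weak {n : ℕ} (p : ℝ) (hp : 2 < p) (u : EE n → ℝ)
    (heq : ∀ φ : EE n → ℝ, ContDiff ℝ (⊤ : ℕ∞) φ →
          tsupport φ ⊆ ball (0 : EE n) 5 →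
          ∫ x in ball (0 : EE n) 5,
            ‖gradient u x‖ ^ (p - 2) * ⟪gradient u x, gradient φ x⟫ = 0)
    (w : EE n → ℝ) (hw : Differentiable ℝ w) (hwc : HasCompactSupport w)
    (hsub : tsupport w ⊆ ball 0 5) (hG : tsupport w ⊆ Good p u)
    (hgw : Integrable (fun x => ‖gradient w x‖ ^ p)) :
    Integrable (fun x => ‖gradient u x‖ ^ (p - 2) * ⟪gradient u x, gradient w x⟫) ∧
    ∫ x, ‖gradient u x‖ ^ (p - 2) * ⟪gradient u x, gradient w x⟫ = 0 := by
  obtain ⟨δ, hδ, hδs⟩ := IsCompact.exists_cthickening_subset_open hwc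
    ((isOpen_Good p u).inter isOpen_ball) (subset_inter hG hsub)
  set K := cthickening δ (tsupport w) with hK
  have hKc : IsCompact K := IsCompact.cthickening hwc
  have hKi := Good_compact p u K hKc (hδs.trans inter_subset_left)
  have hKm : MeasurableSet K := hKc.isClosed.measurableSet
  set F := K.indicator fun x => ‖gradient u x‖ ^ (p - 2) • gradient u x with hF
  have hFq := memLp_F p hp u K hKm hKi
  rw [← hF] at hFq
  have hp0 : 0 < p := by linarith
  have hpq : (p / (p - 1)).HolderConjugate p :=
    (Real.HolderConjugate.conjExponent (by linarith : (1:ℝ) < p)).symm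
  have hgp : MemLp (gradient w) (ENNReal.ofReal p) volume := by
    rw [← integrable_norm_rpow_iff (meas_grad w).aestronglyMeasurable (by simpa using hp0) (by simp)]
    rwa [ENNReal.toReal_ofReal hp0.le]
  have := hpq.ennrealOfReal
  have : Fact (1 ≤ ENNReal.ofReal p) := ⟨by rw [ENNReal.one_le_ofReal]; linarith⟩
  have : Fact (1 ≤ ENNReal.ofReal (p / (p - 1))) := ⟨by rw [ENNReal.one_le_ofReal]; exact hpq.lt.le⟩
  have : Fact (ENNReal.ofReal p ≠ ∞) := ⟨by simp⟩
  have hcont := cont_pair (ENNReal.ofReal p) (ENNReal.ofReal (p / (p - 1))) F (gradient w) hFq hgp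
  set h := fun t : EE n => ∫ x, ⟪F x, gradient w (x - t)⟫ with hh
  have hg0 : ∀ (f : EE n → ℝ) x, x ∉ tsupport f → gradient f x = 0 := fun f x => grad_zero f x
  -- integrability of F and gradient w
  have hF1 : Integrable F := by
    have h1 : MemLp (K.indicator F) 1 volume := by
      rw [memLp_indicator_iff_restrict hKm]
      have : IsFiniteMeasure (volume.restrict K) := ⟨by simpa using hKc.measure_lt_top⟩
      exact (hFq.restrict K).mono_exponent Fact.out
    have : K.indicator F = F := by rw [hF, indicator_indicator, inter_self]
    rw [this] at h1
    exact memLp_one_iff_integrable.1 h1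
  have hw1 : Integrable (gradient w) := by
    have h1 : MemLp ((tsupport w).indicator (gradient w)) 1 volume := by
      rw [memLp_indicator_iff_restrict (isClosed_tsupport w).measurableSet]
      have : IsFiniteMeasure (volume.restrict (tsupport w)) := ⟨by simpa using hwc.measure_lt_top⟩
      exact (hgp.restrict _).mono_exponent Fact.out
    have : (tsupport w).indicator (gradient w) = gradient w := by
      ext1 x
      by_cases hx : x ∈ tsupport w
      · simp [hx]
      · simp [hx, hg0 w x hx]
    rw [this] at h1
    exact memLp_one_iff_integrable.1 h1
  have hrew : ∀ f : EE n → ℝ, tsupport f ⊆ K → ∀ x,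
      ‖gradient u x‖ ^ (p - 2) * ⟪gradient u x, gradient f x⟫ = ⟪F x, gradient f x⟫ := by
    intro f hf x
    by_cases hx : x ∈ K
    · simp only [hF, hx, indicator_of_mem, inner_smul_left]; simp
    · rw [hg0 f x (fun h => hx (hf h))]; simp
  have hwK : tsupport w ⊆ K := self_subset_cthickening _
  simp_rw [hrew w hwK]
  refine ⟨?_, ?_⟩
  · exact memLp_one_iff_integrable.1 ((innerSL ℝ (E := EE n)).memLp_of_bilin 1 hFq hgp)
  have h0 : ∫ x, ⟪F x, gradient w x⟫ = h 0 := by simp [hh]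
  rw [h0]
  have hzero : ∀ ε > 0, |h 0| ≤ ε := by
    intro ε hε
    obtain ⟨δ', hδ', hd⟩ := Metric.continuous_iff.1 hcont 0 ε hε
    set r := min δ δ' with hr
    have hr0 : 0 < r := lt_min hδ hδ'
    let B : ContDiffBump (0 : EE n) := ⟨r / 2, r, half_pos hr0, half_lt_self hr0⟩
    set ρ := B.normed volume with hρ
    have hρs : ContDiff ℝ (⊤ : ℕ∞) ρ := B.contDiff_normed
    have hρc : HasCompactSupport ρ := B.hasCompactSupport_normed
    have hρ0 : ∀ t, 0 ≤ ρ t := B.nonneg_normed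
    have hρ1 : ∫ t, ρ t = 1 := B.integral_normed
    have hρi : Integrable ρ := hρs.continuous.integrable_of_hasCompactSupport hρc
    have hρsup : Function.support ρ = ball 0 r := B.support_normed_eq
    set φ := convolution ρ w (ContinuousLinearMap.lsmul ℝ ℝ) volume with hφ
    have hφs : ContDiff ℝ (⊤ : ℕ∞) φ :=
      hρc.contDiff_convolution_left _ hρs hw.continuous.locallyIntegrable
    have hφK : tsupport φ ⊆ K := by
      apply closure_minimal _ hKc.isClosed
      refine (support_convolution_subset _).trans ?_
      rw [hρsup]
      rintro x ⟨a, ha, b, hb, rfl⟩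
      refine mem_cthickening_of_dist_le _ b δ _ (subset_tsupport _ hb) ?_
      simp only [mem_ball, dist_zero_right] at ha
      simp only [dist_eq_norm, add_sub_cancel_right]
      exact ha.le.trans (min_le_left _ _)
    have e := heq φ hφs (hφK.trans (hδs.trans inter_subset_right))
    simp_rw [hrew φ hφK] at e
    rw [setIntegral_eq_integral_of_forall_compl_eq_zero] at e
    swap
    · intro x hx
      rw [hg0 φ x (fun h => hx (hφK.trans (hδs.trans inter_subset_right) h))]; simp
    have e2 : ∫ x, ⟪F x, gradient φ x⟫ = ∫ x, ∫ t, ρ t * ⟪F x, gradient w (x - t)⟫ := by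
      congr 1; ext1 x
      rw [grad_inner]
      exact moll_deriv ρ w (hρs.of_le (by exact_mod_cast le_top)) hρc hw hw1 x (F x)
    obtain ⟨C, hC⟩ := hρc.exists_bound_of_continuous hρs.continuous
    have hprod : Integrable (Function.uncurry fun (x t : EE n) => ρ t * ⟪F x, gradient w (x - t)⟫)
        (volume.prod volume) := by
      have hmp : MeasurePreserving (fun z : EE n × EE n => (z.1, z.1 - z.2))
          (volume.prod volume) (volume.prod volume) := by
        have a := measurePreserving_prod_sub (volume : Measure (EE n)) (volume : Measure (EE n))
        have b : MeasurePreserving (fun z : EE n × EE n => (z.1, -z.2))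
          (volume.prod volume) (volume.prod volume) :=
          (MeasurePreserving.id _).prod (Measure.measurePreserving_neg volume)
        have := b.comp a
        convert this using 2 with z
        ext1 <;> simp
      have hi : Integrable (fun z : EE n × EE n => ‖F z.1‖ * ‖gradient w z.2‖) (volume.prod volume) :=
        hF1.norm.mul_prod hw1.norm
      have hi2 := (hmp.integrable_comp hi.aestronglyMeasurable).2 hi
      have hFm : AEStronglyMeasurable (fun z : EE n × EE n => F z.1) (volume.prod volume) :=
        hF1.aestronglyMeasurable.comp_fst
      have hwm : Measurable (fun z : EE n × EE n => gradient w (z.1 - z.2)) :=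
        (meas_grad w).comp (measurable_fst.sub measurable_snd)
      refine (hi2.const_mul C).mono' ?_ ?_
      · have hm : AEStronglyMeasurable (fun z : EE n × EE n => ρ z.2) (volume.prod volume) :=
          (hρs.continuous.comp continuous_snd).aestronglyMeasurable
        exact hm.mul (hFm.inner hwm.aestronglyMeasurable)
      · refine Eventually.of_forall fun z => ?_
        simp only [Function.uncurry, norm_mul, Function.comp]
        gcongr
        · exact (norm_nonneg _).trans (hC 0)
        · exact hC _
        · exact norm_inner_le_norm _ _
    rw [e2, integral_integral_swap hprod] at e
    simp_rw [integral_const_mul] at e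
    have hhi : Integrable (fun t => ρ t * h t) :=
      (hρs.continuous.mul hcont).integrable_of_hasCompactSupport hρc.mul_right
    have e3 : h 0 = ∫ t, ρ t * (h 0 - h t) := by
      simp_rw [mul_sub]
      rw [integral_sub (hρi.mul_const _) hhi, integral_mul_const, hρ1]
      simp only [hh] at e ⊢
      rw [e]; simp
    rw [e3]
    calc |∫ t, ρ t * (h 0 - h t)| ≤ ∫ t, ρ t * ε := by
          rw [← Real.norm_eq_abs]
          apply norm_integral_le_of_norm_le (hρi.mul_const _)
          refine Eventually.of_forall fun t => ?_
          rw [norm_mul, Real.norm_of_nonneg (hρ0 t)]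
          by_cases ht : t ∈ Function.support ρ
          · rw [hρsup] at ht
            have := hd t (ht.trans_le (min_le_right _ _))
            rw [dist_comm, dist_eq_norm] at this
            exact mul_le_mul_of_nonneg_left this.le (hρ0 t)
          · simp only [Function.mem_support, not_not] at ht
            simp [ht]
      _ = ε := by rw [integral_mul_const, hρ1, one_mul]
  by_contra hne
  have := hzero (|h 0| / 2) (by positivity)
  have : 0 < |h 0| := abs_pos.2 hne
  linarith


lemma weak2 {n : ℕ} (p : ℝ) (hp : 2 < p) (u : EE n → ℝ)
    (heq : ∀ φ : EE n → ℝ, ContDiff ℝ (⊤ : ℕ∞) φ →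
          tsupport φ ⊆ ball (0 : EE n) 5 →
          ∫ x in ball (0 : EE n) 5,
            ‖gradient u x‖ ^ (p - 2) * ⟪gradient u x, gradient φ x⟫ = 0)
    (w : EE n → ℝ) (hw : Differentiable ℝ w) (hwc : HasCompactSupport w)
    (hsub : tsupport w ⊆ ball 0 5) (hG : tsupport w ⊆ Good p u)
    (A : ℝ) (hA : 0 ≤ A) (hgw : ∀ x ∈ tsupport w, ‖gradient w x‖ ≤ A + ‖gradient u x‖) :
    Integrable (fun x => ‖gradient w x‖ ^ p) ∧
    Integrable (fun x => ‖gradient u x‖ ^ (p - 2) * ⟪gradient u x, gradient w x⟫) ∧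
    ∫ x, ‖gradient u x‖ ^ (p - 2) * ⟪gradient u x, gradient w x⟫ = 0 := by
  have hi : Integrable (fun x => ‖gradient w x‖ ^ p) := by
    have h1 := Good_compact p u _ hwc hG
    have hm : MeasurableSet (tsupport w) := (isClosed_tsupport w).measurableSet
    have h2 : IntegrableOn (fun x => 2 ^ p * (A ^ p + ‖gradient u x‖ ^ p)) (tsupport w) :=
      ((integrableOn_const hwc.measure_lt_top.ne).add h1).const_mul _
    rw [← integrable_indicator_iff hm] at h2
    refine h2.mono' ?_ ?_
    · have := meas_grad w
      exact Measurable.aestronglyMeasurable (by fun_prop)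
    · refine Eventually.of_forall fun x => ?_
      rw [Real.norm_of_nonneg (by positivity)]
      by_cases hx : x ∈ tsupport w
      · simp only [hx, indicator_of_mem]
        have hg := norm_nonneg (gradient u x)
        calc ‖gradient w x‖ ^ p ≤ (2 * max A ‖gradient u x‖) ^ p := by
              apply Real.rpow_le_rpow (norm_nonneg _) _ (by linarith)
              have := hgw x hx
              have := le_max_left A ‖gradient u x‖
              have := le_max_right A ‖gradient u x‖
              linarith
          _ = 2 ^ p * (max A ‖gradient u x‖) ^ p := Real.mul_rpow (by norm_num) (le_max_of_le_left hA)
          _ ≤ _ := by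
              gcongr
              rcases max_choice A ‖gradient u x‖ with h | h <;> rw [h]
              · have := Real.rpow_nonneg hg p; linarith
              · have := Real.rpow_nonneg hA p; linarith
      · simp [hx, grad_zero w x hx, Real.zero_rpow (by linarith : p ≠ 0)]
  exact ⟨hi, weak p hp u heq w hw hwc hsub hG hi⟩

noncomputable def Tp (ε t : ℝ) : ℝ := max 0 (min 1 (t / ε - 1))
noncomputable def TT (ε t : ℝ) : ℝ := ∫ s in (0:ℝ)..t, Tp ε s

lemma Tp_cont (ε : ℝ) : Continuous (Tp ε) := by unfold Tp; fun_prop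

lemma Tp_nonneg (ε t : ℝ) : 0 ≤ Tp ε t := le_max_left _ _

lemma Tp_le (ε t : ℝ) : Tp ε t ≤ 1 := max_le zero_le_one (min_le_left _ _)

lemma Tp_mono {ε : ℝ} (hε : 0 < ε) : Monotone (Tp ε) := by
  intro a b hab
  unfold Tp
  gcongr

lemma Tp_zero {ε t : ℝ} (hε : 0 < ε) (ht : t ≤ ε) : Tp ε t = 0 := by
  unfold Tp
  apply max_eq_left
  apply (min_le_right _ _).trans
  have : t / ε ≤ 1 := (div_le_one hε).2 ht
  linarith

lemma Tp_one {ε t : ℝ} (hε : 0 < ε) (ht : 2 * ε ≤ t) : Tp ε t = 1 := by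
  unfold Tp
  have : 2 ≤ t / ε := (le_div_iff₀ hε).2 ht
  rw [min_eq_left (by linarith)]; simp

lemma Tp_pos {ε t : ℝ} (hε : 0 < ε) (ht : ε < t) : 0 < Tp ε t := by
  unfold Tp
  have : 1 < t / ε := (one_lt_div hε).2 ht
  apply lt_max_of_lt_right
  apply lt_min one_pos
  linarith

lemma TT_deriv (ε t : ℝ) : HasDerivAt (TT ε) (Tp ε t) t :=
  intervalIntegral.integral_hasDerivAt_right ((Tp_cont ε).intervalIntegrable _ _)
    ((Tp_cont ε).stronglyMeasurableAtFilter _ _) (Tp_cont ε).continuousAt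

lemma TT_zero {ε t : ℝ} (hε : 0 < ε) (ht : t ≤ ε) : TT ε t = 0 := by
  unfold TT
  rw [intervalIntegral.integral_congr (g := fun _ => (0:ℝ))]
  · simp
  · intro s hs
    apply Tp_zero hε
    rw [uIcc, mem_Icc] at hs
    exact hs.2.trans (max_le hε.le ht)

lemma TT_le {ε t : ℝ} (hε : 0 < ε) (ht : 0 ≤ t) : TT ε t ≤ t * Tp ε t := by
  unfold TT
  calc _ ≤ ∫ s in (0:ℝ)..t, Tp ε t := by
        apply intervalIntegral.integral_mono_on ht ((Tp_cont ε).intervalIntegrable _ _)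
        · simp
        · intro s hs; exact Tp_mono hε hs.2
    _ = _ := by simp

lemma TT_mono (ε : ℝ) : Monotone (TT ε) :=
  monotone_of_deriv_nonneg (fun t => (TT_deriv ε t).differentiableAt)
    (fun t => by rw [(TT_deriv ε t).deriv]; exact Tp_nonneg _ _)

lemma TT_nonneg {ε : ℝ} (hε : 0 < ε) (t : ℝ) : 0 ≤ TT ε t := by
  rcases le_total t ε with h | h
  · rw [TT_zero hε h]
  · rw [← TT_zero hε le_rfl]; exact TT_mono ε h

lemma TT_pos {ε t : ℝ} (hε : 0 < ε) (ht : ε < t) : 0 < TT ε t := by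
  have h : StrictMonoOn (TT ε) (Ici ε) := by
    apply strictMonoOn_of_deriv_pos (convex_Ici ε)
    · exact (continuous_iff_continuousAt.2 fun t => (TT_deriv ε t).continuousAt).continuousOn
    · intro x hx
      rw [interior_Ici] at hx
      rw [(TT_deriv ε x).deriv]
      exact Tp_pos hε hx
  have := h self_mem_Ici ht.le ht
  rwa [TT_zero hε le_rfl] at this

lemma elem_ineq {p A η g : ℝ} {N : ℕ} (hp : 2 < p) (hN : p ≤ N) (hA : 0 ≤ A) (h0 : 0 ≤ η)
    (h1 : η ≤ 1) (hg : 0 ≤ g) :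
    A * η ^ (N - 1) * g ^ (p - 1) ≤ η ^ N * g ^ p / 2 + A * (2 * A) ^ (p - 1) := by
  have hN1 : 1 ≤ N := by
    have : (2:ℝ) < N := hp.trans_le hN
    exact_mod_cast (by linarith : (1:ℝ) ≤ N)
  have hgp : g ^ p = g ^ (p - 1) * g := by
    rw [← Real.rpow_add_one' hg (by linarith)]; congr 1; ring
  have hηN : η ^ N = η ^ (N - 1) * η := by rw [← pow_succ, Nat.sub_add_cancel hN1]
  have hX : 0 ≤ η ^ (N - 1) * g ^ (p - 1) := by positivity
  rcases le_total (2 * A) (η * g) with h | h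
  · have : 0 ≤ A * (2 * A) ^ (p - 1) := by positivity
    rw [hgp, hηN]
    nlinarith [mul_le_mul_of_nonneg_left h hX]
  · have hpos : 0 ≤ η ^ N * g ^ p / 2 := by positivity
    have h2 : η ^ (N - 1) * g ^ (p - 1) ≤ (2 * A) ^ (p - 1) := by
      calc η ^ (N - 1) * g ^ (p - 1) ≤ η ^ (p - 1) * g ^ (p - 1) := by
            gcongr
            rw [← Real.rpow_natCast]
            rcases h0.eq_or_lt with h | h
            · have h3 : ((N - 1 : ℕ) : ℝ) ≠ 0 := by
                rw [Nat.cast_sub hN1]; push_cast; intro h4; linarith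
              have h4 : p - 1 ≠ 0 := by intro h5; linarith
              rw [← h, Real.zero_rpow h3, Real.zero_rpow h4]
            · apply Real.rpow_le_rpow_of_exponent_ge h h1
              rw [Nat.cast_sub hN1]; push_cast; linarith
        _ = (η * g) ^ (p - 1) := (Real.mul_rpow h0 hg).symm
        _ ≤ _ := Real.rpow_le_rpow (by positivity) h (by linarith)
    nlinarith [mul_le_mul_of_nonneg_left h2 hA]


lemma cacc {n : ℕ} (p : ℝ) (hp : 2 < p) (u : EE n → ℝ) (hu : Differentiable ℝ u)
    (heq : ∀ φ : EE n → ℝ, ContDiff ℝ (⊤ : ℕ∞) φ →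
          tsupport φ ⊆ ball (0 : EE n) 5 →
          ∫ x in ball (0 : EE n) 5,
            ‖gradient u x‖ ^ (p - 2) * ⟪gradient u x, gradient φ x⟫ = 0)
    (ψ η : EE n → ℝ) (hψ : Differentiable ℝ ψ) (A0 D M R : ℝ) (hA0 : 0 ≤ A0) (hD : 0 ≤ D) (hM : 0 ≤ M)
    (hψ' : ∀ x, ‖fderiv ℝ ψ x‖ ≤ A0) (hη : Differentiable ℝ η) (hη' : ∀ x, ‖fderiv ℝ η x‖ ≤ D)
    (hη0 : ∀ x, 0 ≤ η x) (hη1 : ∀ x, η x ≤ 1) (s0 : EE n) (hηs : tsupport η ⊆ closedBall s0 R)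
    (hR : closedBall s0 R ⊆ ball 0 5) (hMb : ∀ x ∈ closedBall s0 R, ψ x - u x ≤ M)
    (ε : ℝ) (hε : 0 < ε) (hG : ∀ x ∈ closedBall s0 R, ε ≤ ψ x - u x → x ∈ Good p u)
    (N : ℕ) (hN : p ≤ N) :
    ∫⁻ x, ENNReal.ofReal (η x ^ N * Tp ε (ψ x - u x) * ‖gradient u x‖ ^ p) ≤
      ENNReal.ofReal (2 * ((A0 + N * M * D) * (2 * (A0 + N * M * D)) ^ (p - 1)) *
        volume.real (closedBall s0 R)) := by
  set A := A0 + N * M * D with hA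
  have hApos : 0 ≤ A := by positivity
  set w : EE n → ℝ := fun x => η x ^ N * TT ε (ψ x - u x) with hw
  have hN1 : 1 ≤ N := by
    have : (2:ℝ) < N := hp.trans_le hN
    exact_mod_cast (by linarith : (1:ℝ) ≤ N)
  have hN0 : N ≠ 0 := by omega
  have hwd : ∀ x, HasFDerivAt w ((η x ^ N) • (Tp ε (ψ x - u x) • (fderiv ℝ ψ x - fderiv ℝ u x)) +
      TT ε (ψ x - u x) • ((N * η x ^ (N - 1)) • fderiv ℝ η x)) x := by
    intro x
    have h1 := (hη x).hasFDerivAt.pow N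
    have h2 := (TT_deriv ε (ψ x - u x)).comp_hasFDerivAt x ((hψ x).hasFDerivAt.sub (hu x).hasFDerivAt)
    have h3 := h1.mul h2
    refine HasFDerivAt.congr_fderiv h3 ?_
    simp
  have hwg : ∀ x, gradient w x = (η x ^ N * Tp ε (ψ x - u x)) • (gradient ψ x - gradient u x) +
      (TT ε (ψ x - u x) * (N * η x ^ (N - 1))) • gradient η x := by
    intro x
    simp only [gradient, (hwd x).fderiv, map_add, map_sub, map_smul, smul_smul]
  set K := closedBall s0 R ∩ {x | ε ≤ ψ x - u x} with hK
  have hcl : IsClosed {x | ε ≤ ψ x - u x} :=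
    isClosed_le continuous_const (hψ.continuous.sub hu.continuous)
  have hKc : IsCompact K := (isCompact_closedBall s0 R).inter_right hcl
  have hwK : tsupport w ⊆ K := by
    apply closure_minimal _ hKc.isClosed
    intro x hx
    have hx' : η x ^ N * TT ε (ψ x - u x) ≠ 0 := hx
    refine ⟨hηs (subset_tsupport _ ?_), ?_⟩
    · intro h; simp [h, hN0] at hx'
    · by_contra h
      rw [mem_setOf_eq, not_le] at h
      rw [TT_zero hε h.le] at hx'; simp at hx'
  have hwc : HasCompactSupport w := hKc.of_isClosed_subset (isClosed_tsupport _) hwK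
  have hKG : K ⊆ Good p u := fun x hx => hG x hx.1 hx.2
  have hTle : ∀ x ∈ closedBall s0 R, TT ε (ψ x - u x) ≤ M * Tp ε (ψ x - u x) := by
    intro x hx
    rcases le_total (ψ x - u x) 0 with h | h
    · rw [TT_zero hε (h.trans hε.le)]; exact mul_nonneg hM (Tp_nonneg _ _)
    · exact (TT_le hε h).trans (mul_le_mul_of_nonneg_right (hMb x hx) (Tp_nonneg _ _))
  obtain ⟨-, hintg, hzero⟩ := weak2 p hp u heq w (fun x => (hwd x).differentiableAt) hwc
    (hwK.trans (inter_subset_left.trans hR)) (hwK.trans hKG) A hApos (by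
      intro x hx
      have hxB := (hwK hx).1
      rw [hwg]
      have t0 := Tp_nonneg ε (ψ x - u x)
      have t1 := Tp_le ε (ψ x - u x)
      have hT0 := TT_nonneg hε (ψ x - u x)
      have e0 := hη0 x
      have e1 := hη1 x
      calc _ ≤ ‖(η x ^ N * Tp ε (ψ x - u x)) • (gradient ψ x - gradient u x)‖ +
            ‖(TT ε (ψ x - u x) * (N * η x ^ (N - 1))) • gradient η x‖ := norm_add_le _ _
        _ ≤ 1 * (A0 + ‖gradient u x‖) + (M * 1 * (N * 1)) * D := by
          rw [norm_smul, norm_smul, Real.norm_of_nonneg (by positivity), Real.norm_of_nonneg (by positivity)]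
          gcongr
          · exact mul_le_one₀ (pow_le_one₀ e0 e1) t0 t1
          · refine (norm_sub_le _ _).trans ?_
            gcongr
            rw [norm_grad]; exact hψ' x
          · exact (hTle x hxB).trans (by gcongr)
          · exact pow_le_one₀ e0 e1
          · rw [norm_grad]; exact hη' x
        _ = A + ‖gradient u x‖ := by rw [hA]; ring)
  set C1 := A * (2 * A) ^ (p - 1) with hC1
  have hC1pos : 0 ≤ C1 := by positivity
  set B := closedBall s0 R with hB
  have hBm : MeasurableSet B := measurableSet_closedBall
  set f : EE n → ℝ := fun x => η x ^ N * Tp ε (ψ x - u x) * ‖gradient u x‖ ^ p with hf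
  have hf0 : ∀ x, 0 ≤ f x := fun x => by
    have := Tp_nonneg ε (ψ x - u x); have := hη0 x; simp only [hf]; positivity
  have hfm : AEStronglyMeasurable f volume := by
    have h1 := (meas_grad u).norm.pow_const p
    have h2 : Continuous fun x => η x ^ N * Tp ε (ψ x - u x) :=
      (hη.continuous.pow N).mul ((Tp_cont ε).comp (hψ.continuous.sub hu.continuous))
    exact (h2.measurable.mul h1).aestronglyMeasurable
  have hfi : Integrable f := by
    have h1 := Good_compact p u K hKc hKG
    rw [← integrable_indicator_iff hKc.isClosed.measurableSet] at h1
    refine h1.mono' hfm (Eventually.of_forall fun x => ?_)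
    rw [Real.norm_of_nonneg (hf0 x)]
    by_cases hx : x ∈ K
    · simp only [hx, indicator_of_mem, hf]
      have t0 := Tp_nonneg ε (ψ x - u x)
      have : η x ^ N * Tp ε (ψ x - u x) ≤ 1 :=
        mul_le_one₀ (pow_le_one₀ (hη0 x) (hη1 x)) t0 (Tp_le _ _)
      exact mul_le_of_le_one_left (by positivity) this
    · simp only [hx, indicator_of_notMem, not_false_eq_true, hf]
      apply le_of_eq
      by_cases hxB : x ∈ B
      · have : ¬ (ε ≤ ψ x - u x) := fun h => hx ⟨hxB, h⟩
        rw [Tp_zero hε (not_le.1 this).le]; simp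
      · have : η x = 0 := by
          by_contra h; exact hxB (hηs (subset_tsupport _ h))
        simp [this, hN0]
  have hpt : ∀ x, ‖gradient u x‖ ^ (p - 2) * ⟪gradient u x, gradient w x⟫ ≤
      - (f x / 2) + B.indicator (fun _ => C1) x := by
    intro x
    by_cases hxB : x ∈ B
    · simp only [hxB, indicator_of_mem]
      set g := ‖gradient u x‖ with hg
      have hg0 : 0 ≤ g := norm_nonneg _
      have t0 := Tp_nonneg ε (ψ x - u x)
      have t1 := Tp_le ε (ψ x - u x)
      have hT0 := TT_nonneg hε (ψ x - u x)
      have e0 := hη0 x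
      have e1 := hη1 x
      have i1 : ⟪gradient u x, gradient ψ x⟫ ≤ g * A0 := by
        refine (real_inner_le_norm _ _).trans ?_
        gcongr; rw [norm_grad]; exact hψ' x
      have i2 : ⟪gradient u x, gradient η x⟫ ≤ g * D := by
        refine (real_inner_le_norm _ _).trans ?_
        gcongr; rw [norm_grad]; exact hη' x
      have hgg : g ^ (p - 2) * g ^ 2 = g ^ p := by
        rw [← Real.rpow_natCast, ← Real.rpow_add_of_nonneg hg0 (by linarith) (by norm_num)]
        congr 1; norm_num
      have hg1 := pow_id hp hg0
      have hηN : η x ^ N = η x ^ (N - 1) * η x := by rw [← pow_succ, Nat.sub_add_cancel hN1]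
      have hηle : η x ^ N ≤ η x ^ (N - 1) := pow_le_pow_of_le_one e0 e1 (by omega)
      rw [hwg, inner_add_right, inner_smul_right, inner_smul_right, inner_sub_right,
        real_inner_self_eq_norm_sq]
      have key := elem_ineq (A := A) (η := η x) (g := g) hp hN hApos e0 e1 hg0
      calc g ^ (p - 2) * (η x ^ N * Tp ε (ψ x - u x) * (⟪gradient u x, gradient ψ x⟫ - g ^ 2) +
            TT ε (ψ x - u x) * (N * η x ^ (N - 1)) * ⟪gradient u x, gradient η x⟫)
          ≤ g ^ (p - 2) * (η x ^ N * Tp ε (ψ x - u x) * (g * A0 - g ^ 2) +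
            TT ε (ψ x - u x) * (N * η x ^ (N - 1)) * (g * D)) := by gcongr
        _ ≤ g ^ (p - 2) * ((η x ^ (N - 1) * Tp ε (ψ x - u x) * (g * A0) -
              η x ^ N * Tp ε (ψ x - u x) * g ^ 2) +
            (M * Tp ε (ψ x - u x)) * (N * η x ^ (N - 1)) * (g * D)) := by
          rw [mul_sub]
          gcongr
          exact hTle x hxB
        _ = Tp ε (ψ x - u x) * (A * η x ^ (N - 1) * (g ^ (p - 2) * g) - η x ^ N * (g ^ (p - 2) * g ^ 2)) := by
          rw [hA]; ring
        _ = Tp ε (ψ x - u x) * (A * η x ^ (N - 1) * g ^ (p - 1) - η x ^ N * g ^ p) := by rw [hgg, hg1]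
        _ ≤ Tp ε (ψ x - u x) * (C1 - η x ^ N * g ^ p / 2) := by
          apply mul_le_mul_of_nonneg_left _ t0; linarith
        _ = - (f x / 2) + Tp ε (ψ x - u x) * C1 := by simp only [hf]; ring
        _ ≤ _ := by nlinarith
    · have : x ∉ tsupport w := fun h => hxB (hwK h).1
      have h0 : η x = 0 := by
          by_contra h; exact hxB (hηs (subset_tsupport _ h))
      rw [grad_zero w x this]
      simp [hxB, hf, h0, hN0]
  have hCi : Integrable (B.indicator (fun _ => C1)) :=
    (integrable_indicator_iff hBm).2 (integrableOn_const (isCompact_closedBall _ _).measure_lt_top.ne)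
  have hmono := integral_mono hintg ((hfi.div_const 2).neg.add hCi) hpt
  rw [hzero] at hmono
  have e1 : ∫ x, ((-fun x => f x / 2) + B.indicator fun _ => C1) x = - ((∫ x, f x) / 2) + C1 * volume.real B := by
    rw [integral_add' (hfi.div_const 2).neg hCi, integral_neg', integral_div, integral_indicator hBm]
    simp [mul_comm]
  rw [e1] at hmono
  rw [← ofReal_integral_eq_lintegral_ofReal hfi (Eventually.of_forall hf0)]
  apply ENNReal.ofReal_le_ofReal
  linarith


lemma moll_lip {n : ℕ} (g : EE n → ℝ) (C : NNReal) (hg : LipschitzWith C g) (δ : ℝ) (hδ : 0 < δ) :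
    ∃ ψ : EE n → ℝ, Differentiable ℝ ψ ∧ (∀ x, ‖fderiv ℝ ψ x‖ ≤ C) ∧ ∀ x, |ψ x - g x| ≤ δ := by
  set r : ℝ := δ / (C + 1) with hr
  have hr0 : 0 < r := by positivity
  let B : ContDiffBump (0 : EE n) := ⟨r / 2, r, half_pos hr0, half_lt_self hr0⟩
  set ρ := B.normed volume with hρ
  have hρs : ContDiff ℝ (⊤ : ℕ∞) ρ := B.contDiff_normed
  have hρc : HasCompactSupport ρ := B.hasCompactSupport_normed
  have hρ0 : ∀ t, 0 ≤ ρ t := B.nonneg_normed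
  have hρ1 : ∫ t, ρ t = 1 := B.integral_normed
  have hρi : Integrable ρ := hρs.continuous.integrable_of_hasCompactSupport hρc
  set φ := convolution ρ g (ContinuousLinearMap.lsmul ℝ ℝ) volume with hφ
  have hφs : ContDiff ℝ (⊤ : ℕ∞) φ :=
      hρc.contDiff_convolution_left _ hρs hg.continuous.locallyIntegrable
  refine ⟨φ, hφs.differentiable (by simp), ?_, ?_⟩
  · intro x
    apply norm_fderiv_le_of_lipschitz
    apply LipschitzWith.of_dist_le_mul
    intro x y
    have hi : ∀ x, Integrable (fun t => ρ t * g (x - t)) := fun x =>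
      (hρs.continuous.mul (hg.continuous.comp (continuous_const.sub continuous_id))).integrable_of_hasCompactSupport
        hρc.mul_right
    rw [dist_eq_norm]
    have : φ x - φ y = ∫ t, ρ t * (g (x - t) - g (y - t)) := by
      simp_rw [mul_sub]
      rw [integral_sub (hi x) (hi y)]
      simp [hφ, convolution]
    rw [this]
    calc _ ≤ ∫ t, ρ t * (C * dist x y) := by
          apply norm_integral_le_of_norm_le (hρi.mul_const _)
          refine Eventually.of_forall fun t => ?_
          rw [norm_mul, Real.norm_of_nonneg (hρ0 t)]
          apply mul_le_mul_of_nonneg_left _ (hρ0 t)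
          have := hg.dist_le_mul (x - t) (y - t)
          rw [dist_eq_norm] at this
          simpa using this
      _ = _ := by rw [integral_mul_const, hρ1, one_mul]
  · intro x
    rw [← Real.dist_eq]
    apply B.dist_normed_convolution_le hg.continuous.aestronglyMeasurable
    intro y hy
    refine (hg.dist_le_mul y x).trans ?_
    have h1 : dist y x ≤ r := (mem_ball.1 hy).le
    calc (C:ℝ) * dist y x ≤ (C + 1) * r := by gcongr; linarith
      _ = δ := by rw [hr]; field_simp

lemma baire_step {n : ℕ} (u : EE n → ℝ) (hu : Differentiable ℝ u) (S : Set (EE n)) (hS : IsClosed S)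
    (x0 : EE n) (hx0 : x0 ∈ S) (hx5 : x0 ∈ ball (0 : EE n) 5) :
    ∃ k : NNReal, ∃ s0 ∈ S, ∃ R > 0, closedBall s0 R ⊆ ball 0 5 ∧
      ∀ s ∈ S ∩ closedBall s0 R, ∀ x ∈ ball s (3 * R), |u x - u s| ≤ k * ‖x - s‖ := by
  have : Nonempty S := ⟨⟨x0, hx0⟩⟩
  have : CompleteSpace S := hS.completeSpace_coe
  set f : ℕ → Set S := fun k => {s | ∀ v : EE n, ‖v‖ ≤ 1 / ((k:ℝ) + 1) → |u (s + v) - u s| ≤ k * ‖v‖} with hf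
  have hc : ∀ k, IsClosed (f k) := by
    intro k
    simp only [hf, ofPred_forall]
    refine isClosed_iInter fun v => isClosed_iInter fun _ => ?_
    have := hu.continuous
    exact isClosed_le (by fun_prop) continuous_const
  have hU : ⋃ k, f k = univ := by
    rw [eq_univ_iff_forall]
    intro s
    obtain ⟨C, hC⟩ := ((hu s).isBigO_sub).bound
    rw [Metric.eventually_nhds_iff] at hC
    obtain ⟨ε, hε, hC⟩ := hC
    obtain ⟨k1, hk1⟩ := exists_nat_ge C
    obtain ⟨k2, hk2⟩ := exists_nat_one_div_lt hε
    refine mem_iUnion.2 ⟨max k1 k2, fun v hv => ?_⟩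
    have h3 : (k2:ℝ) ≤ (max k1 k2 : ℕ) := by exact_mod_cast le_max_right _ _
    have h4 : (k1:ℝ) ≤ (max k1 k2 : ℕ) := by exact_mod_cast le_max_left _ _
    have hv2 : ‖v‖ < ε := by
      refine (hv.trans ?_).trans_lt hk2
      gcongr
    have := hC (y := (s:EE n) + v) (by simpa using hv2)
    rw [add_sub_cancel_left, Real.norm_eq_abs] at this
    refine this.trans ?_
    gcongr
    exact hk1.trans h4
  have hd := dense_iUnion_interior_of_closed hc hU
  have hop : IsOpen ((↑) ⁻¹' (ball (0 : EE n) 5) : Set S) := isOpen_ball.preimage continuous_subtype_val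
  obtain ⟨s0, hs05, hs0⟩ := hd.inter_open_nonempty _ hop ⟨⟨x0, hx0⟩, hx5⟩
  obtain ⟨k, hk⟩ := mem_iUnion.1 hs0
  have hs05' : (s0 : EE n) ∈ ball (0 : EE n) 5 := hs05
  have hn : interior (f k) ∩ ((↑) ⁻¹' (ball (0 : EE n) 5) : Set S) ∈ 𝓝 s0 :=
    (isOpen_interior.inter hop).mem_nhds ⟨hk, hs05⟩
  obtain ⟨r1, hr1, hsub⟩ := Metric.mem_nhds_iff.1 hn
  obtain ⟨r2, hr2, hsub2⟩ := Metric.mem_nhds_iff.1 (isOpen_ball.mem_nhds hs05' : ball (0 : EE n) 5 ∈ 𝓝 (s0 : EE n))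
  have hk0 : (0:ℝ) < 1 / ((k:ℝ)+1) := by positivity
  obtain ⟨R, hR0, hRa, hRb, hRc⟩ : ∃ R : ℝ, 0 < R ∧ R ≤ r1/2 ∧ R ≤ r2/2 ∧ R ≤ (1 / ((k:ℝ)+1))/3 :=
    ⟨min (r1/2) (min (r2/2) ((1 / ((k:ℝ)+1))/3)), lt_min (half_pos hr1) (lt_min (half_pos hr2) (by linarith)), min_le_left _ _,
      (min_le_right _ _).trans (min_le_left _ _), (min_le_right _ _).trans (min_le_right _ _)⟩
  refine ⟨(k : NNReal), s0, s0.2, R, hR0, ?_, ?_⟩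
  · exact (closedBall_subset_ball (by linarith)).trans hsub2
  · rintro s ⟨hsS, hsR⟩ x hx
    have h1 : (⟨s, hsS⟩ : S) ∈ f k := by
      apply interior_subset
      apply (hsub _).1
      rw [mem_ball, Subtype.dist_eq]
      rw [mem_closedBall] at hsR
      change dist s s0 < r1
      linarith
    have hx' : ‖x - s‖ < 3 * R := by rwa [mem_ball, dist_eq_norm] at hx
    have := h1 (x - s) (by linarith)
    simpa using this


lemma Good_univ {n : ℕ} (p : ℝ) (hp : 2 < p) (u : EE n → ℝ) (hu : Differentiable ℝ u)
    (heq : ∀ φ : EE n → ℝ, ContDiff ℝ (⊤ : ℕ∞) φ →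
          tsupport φ ⊆ ball (0 : EE n) 5 →
          ∫ x in ball (0 : EE n) 5,
            ‖gradient u x‖ ^ (p - 2) * ⟪gradient u x, gradient φ x⟫ = 0) :
    ball (0 : EE n) 5 ⊆ Good p u := by
  intro x0 hx0
  by_contra hx0S
  obtain ⟨k, s0, hs0, R, hR, hball, hlip⟩ := baire_step u hu (Good p u)ᶜ (isOpen_Good p u).isClosed_compl
    x0 hx0S hx0
  have hScl : IsClosed (Good p u)ᶜ := (isOpen_Good p u).isClosed_compl
  obtain ⟨S, hSdef⟩ : ∃ S, S = (Good p u)ᶜ := ⟨_, rfl⟩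
  rw [← hSdef] at hs0 hlip hScl
  obtain ⟨S0, hS0⟩ : ∃ S0, S0 = S ∩ closedBall s0 R := ⟨_, rfl⟩
  rw [← hS0] at hlip
  have hS0c : IsCompact S0 := by
    rw [hS0]; exact (isCompact_closedBall s0 R).inter_left hScl
  have hs0S0 : s0 ∈ S0 := by rw [hS0]; exact ⟨hs0, mem_closedBall_self hR.le⟩
  have hS0n : S0.Nonempty := ⟨s0, hs0S0⟩
  have hS0R : S0 ⊆ closedBall s0 R := by rw [hS0]; exact inter_subset_right
  have hclose : ∀ s ∈ S0, ∀ x ∈ closedBall s0 R, |u x - u s| ≤ k * dist x s := by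
    intro s hs x hx
    rw [dist_eq_norm]
    apply hlip s hs x
    have h1 := mem_closedBall.1 hx
    have h2 := mem_closedBall'.1 (hS0R hs)
    have h3 := dist_triangle x s0 s
    rw [mem_ball]; linarith
  obtain ⟨g, hg, hgu⟩ := (LipschitzOnWith.of_dist_le_mul (K := k) (f := u) (s := S0) (by
    intro x hx y hy
    exact hclose y hy x (hS0R hx))).extend_real
  set L1 : EE n → ℝ := fun x => g x + (2 * k + 1) * infDist x S0 with hL1
  have hL1lip : LipschitzWith (3 * k + 1) L1 := by
    apply LipschitzWith.of_le_add_mul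
    intro x y
    have h1 := abs_le.1 (hg.dist_le_mul x y)
    have h2 := infDist_le_infDist_add_dist (s := S0) (x := x) (y := y)
    have h3 : (2 * (k:ℝ) + 1) * infDist x S0 ≤ (2 * k + 1) * (infDist y S0 + dist x y) := by gcongr
    simp only [hL1]
    push_cast
    linarith [h1.2]
  have hL0 : ∀ x ∈ S0, L1 x - u x = 0 := by
    intro x hx
    simp only [hL1, infDist_zero_of_mem hx, hgu hx]; ring
  have hLpos : ∀ x ∈ closedBall s0 R, infDist x S0 ≤ L1 x - u x := by
    intro x hx
    obtain ⟨s, hs, hsx⟩ := hS0c.exists_infDist_eq_dist hS0n x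
    have h1 := abs_le.1 (hclose s hs x hx)
    have h2 := abs_le.1 (hg.dist_le_mul x s)
    have h3 := hgu hs
    simp only [hL1, hsx]
    linarith [h1.2, h2.1]
  have hcL : Continuous fun x => L1 x - u x := hL1lip.continuous.sub hu.continuous
  obtain ⟨M0, hM0⟩ := (isCompact_closedBall s0 R).bddAbove_image hcL.continuousOn
  have hM0' : ∀ x ∈ closedBall s0 R, L1 x - u x ≤ M0 := fun x hx => hM0 (mem_image_of_mem _ hx)
  have hM00 : 0 ≤ M0 := by
    have := hM0' s0 (mem_closedBall_self hR.le); rwa [hL0 s0 hs0S0] at this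
  let B : ContDiffBump s0 := ⟨R / 2, R, half_pos hR, half_lt_self hR⟩
  have hBs : ContDiff ℝ 1 B := B.contDiff
  obtain ⟨D, hD⟩ := (B.hasCompactSupport.fderiv ℝ).exists_bound_of_continuous
    (hBs.continuous_fderiv (by norm_num))
  have hD0 : 0 ≤ D := (norm_nonneg _).trans (hD s0)
  set ε : ℕ → ℝ := fun j => 1 / ((j:ℝ) + 1) with hε
  have hε0 : ∀ j, 0 < ε j := fun j => by simp only [hε]; positivity
  have hε1 : ∀ j, ε j ≤ 1 := fun j => by
    simp only [hε]
    rw [div_le_one (by positivity)]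
    have : (0:ℝ) ≤ j := by positivity
    linarith
  have hεt : Tendsto ε atTop (𝓝 0) := tendsto_one_div_add_atTop_nhds_zero_nat
  choose ψ hψd hψl hψc using fun j => moll_lip L1 (3 * k + 1) hL1lip (ε j / 2) (half_pos (hε0 j))
  set N := ⌈p⌉₊
  have hN : p ≤ N := Nat.le_ceil p
  have hN0 : N ≠ 0 := by
    intro h; rw [h] at hN; simp at hN; linarith
  have hc := fun j => cacc p hp u hu heq (ψ j) B (hψd j) (3 * k + 1 : NNReal) D (M0 + 1) R
    (by positivity) hD0 (by positivity) (hψl j) (hBs.differentiable (by norm_num)) hD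
    (fun x => B.nonneg) (fun x => B.le_one) s0 (B.tsupport_eq.subset) hball
    (by
      intro x hx
      have h1 := abs_le.1 (hψc j x)
      have h2 := hM0' x hx
      have h3 := hε1 j
      linarith [h1.2]) (ε j) (hε0 j)
    (by
      intro x hx hxε
      by_contra hxG
      have hxS : x ∈ S0 := by rw [hS0, hSdef]; exact ⟨hxG, hx⟩
      have h1 := abs_le.1 (hψc j x)
      have h2 := hL0 x hxS
      have h3 := hε0 j
      linarith [h1.2]) N hN
  set C : ℝ≥0∞ := ENNReal.ofReal (2 * ((((3 * k + 1 : NNReal):ℝ) + N * (M0 + 1) * D) *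
    (2 * (((3 * k + 1 : NNReal):ℝ) + N * (M0 + 1) * D)) ^ (p - 1)) * volume.real (closedBall s0 R)) with hC
  set f : ℕ → EE n → ℝ≥0∞ := fun j x =>
    ENNReal.ofReal (B x ^ N * Tp (ε j) (ψ j x - u x) * ‖gradient u x‖ ^ p) with hf
  have hgm : Measurable fun x => ‖gradient u x‖ ^ p := (meas_grad u).norm.pow_const p
  have hfm : ∀ j, Measurable (f j) := by
    intro j
    have h2 : Continuous fun x => B x ^ N * Tp (ε j) (ψ j x - u x) :=
      (B.continuous.pow N).mul ((Tp_cont _).comp ((hψd j).continuous.sub hu.continuous))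
    exact (h2.measurable.mul hgm).ennreal_ofReal
  have hfatou : ∫⁻ x, liminf (fun j => f j x) atTop ≤ C := by
    refine (lintegral_liminf_le hfm).trans ?_
    refine liminf_le_of_le (by isBoundedDefault) ?_
    intro b hb
    obtain ⟨j, hj⟩ := hb.exists
    exact hj.trans (hc j)
  set U := ball s0 (R / 2) with hU
  have hUm : MeasurableSet (U \ S) := measurableSet_ball.diff hScl.measurableSet
  have hUR : U ⊆ closedBall s0 R := ball_subset_closedBall.trans (closedBall_subset_closedBall (by linarith))
  have hlim : ∀ x ∈ U \ S, ENNReal.ofReal (‖gradient u x‖ ^ p) ≤ liminf (fun j => f j x) atTop := by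
    rintro x ⟨hxU, hxS⟩
    have hxS0 : x ∉ S0 := fun h => hxS (by rw [hS0] at h; exact h.1)
    have hd : 0 < infDist x S0 := (hS0c.isClosed.notMem_iff_infDist_pos hS0n).1 hxS0
    have hB1 : B x = 1 := B.one_of_mem_closedBall (ball_subset_closedBall hxU)
    have hev : ∀ᶠ j in atTop, ε j < infDist x S0 / 3 := hεt.eventually_lt_const (by positivity)
    refine le_liminf_of_le (by isBoundedDefault) ?_
    filter_upwards [hev] with j hj
    have h1 := abs_le.1 (hψc j x)
    have h2 := hLpos x (hUR hxU)
    have h3 := hε0 j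
    simp only [hf]
    rw [Tp_one (hε0 j) (by linarith [h1.1]), hB1]
    simp
  apply hx0S
  exfalso
  have hs0G : s0 ∈ Good p u := by
    refine ⟨U, isOpen_ball, mem_ball_self (half_pos hR), ?_⟩
    have i1 : IntegrableOn (fun y => ‖gradient u y‖ ^ p) (U \ S) := by
      refine ⟨hgm.aestronglyMeasurable, ?_⟩
      rw [hasFiniteIntegral_iff_ofReal (Eventually.of_forall fun x => by positivity)]
      calc _ ≤ ∫⁻ x in U \ S, liminf (fun j => f j x) atTop := setLIntegral_mono' hUm hlim
        _ ≤ ∫⁻ x, liminf (fun j => f j x) atTop := setLIntegral_le_lintegral _ _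
        _ ≤ C := hfatou
        _ < ∞ := ENNReal.ofReal_lt_top
    have i2 : IntegrableOn (fun y => ‖gradient u y‖ ^ p) (U ∩ S) := by
      refine Measure.integrableOn_of_bounded (M := (k:ℝ) ^ p) ?_ hgm.aestronglyMeasurable ?_
      · exact ((measure_mono inter_subset_left).trans_lt measure_ball_lt_top).ne
      · rw [ae_restrict_iff' (measurableSet_ball.inter hScl.measurableSet)]
        refine Eventually.of_forall ?_
        rintro x ⟨hxU, hxS⟩
        rw [Real.norm_of_nonneg (by positivity), norm_grad]
        have : ‖fderiv ℝ u x‖ ≤ k := by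
          refine norm_fderiv_le_of_lip' ℝ k.2 ?_
          filter_upwards [ball_mem_nhds x (by positivity : 0 < 3 * R)] with y hy
          exact hlip x (by rw [hS0]; exact ⟨hxS, hUR hxU⟩) y hy
        exact Real.rpow_le_rpow (norm_nonneg _) this (by linarith)
    have := i1.union i2
    rwa [diff_union_inter] at this
  rw [hSdef] at hs0
  exact hs0 hs0G


lemma mono_ineq {n : ℕ} (q : ℝ) (hq : 0 < q) (a b : EE n) :
    0 ≤ ⟪‖a‖ ^ q • a - ‖b‖ ^ q • b, a - b⟫ ∧
    (⟪‖a‖ ^ q • a - ‖b‖ ^ q • b, a - b⟫ = 0 → a = b) := by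
  have e : ⟪‖a‖ ^ q • a - ‖b‖ ^ q • b, a - b⟫ =
      (‖a‖ ^ q + ‖b‖ ^ q) * ‖a - b‖ ^ 2 / 2 + (‖a‖ ^ q - ‖b‖ ^ q) * (‖a‖ ^ 2 - ‖b‖ ^ 2) / 2 := by
    rw [norm_sub_sq_real, inner_sub_left, inner_sub_right, inner_sub_right, inner_smul_left, inner_smul_left,
      inner_smul_left, inner_smul_left, real_inner_self_eq_norm_sq, real_inner_self_eq_norm_sq,
      real_inner_comm a b]
    simp; ring
  have h2 : 0 ≤ (‖a‖ ^ q - ‖b‖ ^ q) * (‖a‖ ^ 2 - ‖b‖ ^ 2) := by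
    rcases le_total ‖a‖ ‖b‖ with h | h
    · have h1 : ‖a‖ ^ q ≤ ‖b‖ ^ q := by gcongr
      have h2 : ‖a‖ ^ 2 ≤ ‖b‖ ^ 2 := by gcongr
      nlinarith
    · have h1 : ‖b‖ ^ q ≤ ‖a‖ ^ q := by gcongr
      have h2 : ‖b‖ ^ 2 ≤ ‖a‖ ^ 2 := by gcongr
      nlinarith
  have h1 : 0 ≤ (‖a‖ ^ q + ‖b‖ ^ q) * ‖a - b‖ ^ 2 := by positivity
  rw [e]
  refine ⟨by linarith, fun h => ?_⟩
  have h3 : (‖a‖ ^ q + ‖b‖ ^ q) * ‖a - b‖ ^ 2 = 0 := by linarith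
  rcases mul_eq_zero.1 h3 with h4 | h4
  · have ha : 0 ≤ ‖a‖ ^ q := by positivity
    have hb : 0 ≤ ‖b‖ ^ q := by positivity
    have ha0 : ‖a‖ ^ q = 0 := by linarith
    have hb0 : ‖b‖ ^ q = 0 := by linarith
    rw [Real.rpow_eq_zero (norm_nonneg _) hq.ne'] at ha0 hb0
    rw [norm_eq_zero.1 ha0, norm_eq_zero.1 hb0]
  · exact sub_eq_zero.1 (norm_eq_zero.1 (by simpa using h4))

lemma ibp_cpt {n : ℕ} (w f : EE n → ℝ) (f' : EE n → ℝ) (v : EE n) (hw : Differentiable ℝ w)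
    (hwc : HasCompactSupport w)
    (hgw : Integrable (gradient w)) (hf : ∀ x ∈ tsupport w, DifferentiableAt ℝ f x)
    (hf' : ∀ x ∈ tsupport w, fderiv ℝ f x v = f' x) (hf'c : ContinuousOn f' (tsupport w)) :
    Integrable (fun x => f x * fderiv ℝ w x v) ∧ Integrable (fun x => f' x * w x) ∧
    ∫ x, f x * fderiv ℝ w x v = - ∫ x, f' x * w x := by
  have hK : IsCompact (tsupport w) := hwc
  have hfc : ContinuousOn f (tsupport w) := fun x hx => (hf x hx).continuousAt.continuousWithinAt
  have hw0 : ∀ x, x ∉ tsupport w → w x = 0 := fun x hx => image_eq_zero_of_notMem_tsupport hx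
  have hdw : Integrable (fun x => fderiv ℝ w x v) := by
    simp_rw [← grad_inner]
    exact hgw.const_inner v
  have hdw0 : ∀ x, x ∉ tsupport w → fderiv ℝ w x v = 0 := fun x hx => by
    rw [← grad_inner, grad_zero w x hx]; simp
  have ext : ∀ g : EE n → ℝ, IntegrableOn g (tsupport w) → (∀ x, x ∉ tsupport w → g x = 0) → Integrable g := by
    intro g hg h0
    rw [← integrableOn_iff_integrable_of_support_subset (s := tsupport w)]
    · exact hg
    · intro x hx; by_contra h; exact hx (h0 x h)
  have i1 : Integrable (fun x => f x * fderiv ℝ w x v) :=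
    ext _ (hdw.integrableOn.continuousOn_mul hfc hK) (fun x hx => by rw [hdw0 x hx, mul_zero])
  have i2 : Integrable (fun x => f' x * w x) :=
    ext _ ((hf'c.mul hw.continuous.continuousOn).integrableOn_compact hK) (fun x hx => by rw [hw0 x hx, mul_zero])
  have i3 : Integrable (fun x => f x * w x) :=
    ext _ ((hfc.mul hw.continuous.continuousOn).integrableOn_compact hK) (fun x hx => by rw [hw0 x hx, mul_zero])
  have e : (fun x => fderiv ℝ f x v * w x) = fun x => f' x * w x := by
    ext1 x
    by_cases hx : x ∈ tsupport w
    · rw [hf' x hx]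
    · rw [hw0 x hx]; simp
  refine ⟨i1, i2, ?_⟩
  rw [integral_mul_fderiv_eq_neg_fderiv_mul_of_integrable (by rw [e]; exact i2) i1 i3 hf (fun x _ => hw x), e]

lemma norm_rpow_deriv {n : ℕ} (z x : EE n) (s : ℝ) (hx : x ≠ z) :
    HasFDerivAt (fun x => ‖x - z‖ ^ s) ((s * ‖x - z‖ ^ (s - 2)) • innerSL ℝ (x - z)) x := by
  have h0 : 0 < ‖x - z‖ := norm_pos_iff.2 (sub_ne_zero.2 hx)
  have h1 : HasFDerivAt (fun x : EE n => ‖x - z‖ ^ 2) _ x := ((hasFDerivAt_id x).sub_const z).norm_sq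
  have h2 := h1.rpow_const (p := s / 2) (Or.inl (by positivity))
  have e : (fun x : EE n => (‖x - z‖ ^ 2) ^ (s / 2)) = fun x => ‖x - z‖ ^ s := by
    ext1 y
    rw [← Real.rpow_natCast, ← Real.rpow_mul (norm_nonneg _)]
    congr 1; push_cast; ring
  rw [e] at h2
  refine h2.congr_fderiv ?_
  have e2 : (‖x - z‖ ^ 2) ^ (s / 2 - 1) = ‖x - z‖ ^ (s - 2) := by
    rw [← Real.rpow_natCast, ← Real.rpow_mul (norm_nonneg _)]
    congr 1; push_cast; ring
  rw [e2]
  ext v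
  simp
  ring

lemma div_free {n : ℕ} (z : EE n) (w : EE n → ℝ) (hw : Differentiable ℝ w)
    (hwc : HasCompactSupport w) (hz : z ∉ tsupport w)
    (hgw : Integrable (gradient w)) :
    Integrable (fun x => ‖x - z‖ ^ (-(n:ℝ)) * ⟪x - z, gradient w x⟫) ∧
    ∫ x, ‖x - z‖ ^ (-(n:ℝ)) * ⟪x - z, gradient w x⟫ = 0 := by
  have hne : ∀ x ∈ tsupport w, x ≠ z := fun x hx h => hz (h ▸ hx)
  have key := fun i : Fin n => ibp_cpt w (fun x => ‖x - z‖ ^ (-(n:ℝ)) * (x i - z i))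
    (fun x => ‖x - z‖ ^ (-(n:ℝ)) - n * ‖x - z‖ ^ (-(n:ℝ) - 2) * (x i - z i) ^ 2)
    (EuclideanSpace.single i 1) hw hwc hgw
  have hd : ∀ i : Fin n, ∀ x, x ≠ z → HasFDerivAt (fun x : EE n => ‖x - z‖ ^ (-(n:ℝ)) * (x i - z i))
     (‖x - z‖ ^ (-(n:ℝ)) • (EuclideanSpace.proj i : EE n →L[ℝ] ℝ) +
       (x i - z i) • (((-(n:ℝ)) * ‖x - z‖ ^ (-(n:ℝ) - 2)) • innerSL ℝ (x - z))) x := by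
    intro i x hx
    exact (norm_rpow_deriv z x _ hx).mul
      (((EuclideanSpace.proj i : EE n →L[ℝ] ℝ).hasFDerivAt).sub_const (z i))
  have key2 := fun i => key i (fun x hx => (hd i x (hne x hx)).differentiableAt)
    (by
      intro x hx
      rw [(hd i x (hne x hx)).fderiv]
      simp [EuclideanSpace.inner_single_right]
      ring)
    (by
      have h1 : ∀ s : ℝ, ContinuousOn (fun x : EE n => ‖x - z‖ ^ s) (tsupport w) := fun s =>
        ContinuousOn.rpow_const (by fun_prop) (fun x hx => Or.inl (by
          simpa [sub_eq_zero] using hne x hx))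
      exact (h1 _).sub ((continuousOn_const.mul (h1 _)).mul (by fun_prop)))
  have hexp : ∀ x, ‖x - z‖ ^ (-(n:ℝ)) * ⟪x - z, gradient w x⟫ =
      ∑ i, ‖x - z‖ ^ (-(n:ℝ)) * (x i - z i) * fderiv ℝ w x (EuclideanSpace.single i 1) := by
    intro x
    rw [grad_inner]
    conv_lhs => arg 2; rw [← (EuclideanSpace.basisFun (Fin n) ℝ).sum_repr (x - z)]
    simp [Finset.mul_sum, mul_assoc]
  simp_rw [hexp]
  refine ⟨integrable_finsetSum _ fun i _ => (key2 i).1, ?_⟩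
  rw [integral_finsetSum _ fun i _ => (key2 i).1]
  rw [Finset.sum_congr rfl fun i _ => (key2 i).2.2, Finset.sum_neg_distrib,
    ← integral_finsetSum _ fun i _ => (key2 i).2.1, neg_eq_zero]
  apply integral_eq_zero_of_ae
  refine Eventually.of_forall fun x => ?_
  simp only [Pi.zero_apply]
  by_cases hx : x ∈ tsupport w
  · rw [← Finset.sum_mul, Finset.sum_sub_distrib, ← Finset.mul_sum]
    have h0 : 0 < ‖x - z‖ := norm_pos_iff.2 (sub_ne_zero.2 (hne x hx))
    have e1 : ∑ i, (x i - z i) ^ 2 = ‖x - z‖ ^ 2 := by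
      rw [EuclideanSpace.norm_sq_eq]; simp
    have e2 : ‖x - z‖ ^ (-(n:ℝ) - 2) * ‖x - z‖ ^ 2 = ‖x - z‖ ^ (-(n:ℝ)) := by
      rw [← Real.rpow_natCast, ← Real.rpow_add h0]; congr 1; push_cast; ring
    rw [e1, mul_assoc, e2]
    simp
  · simp [image_eq_zero_of_notMem_tsupport hx]


lemma grad_int {n : ℕ} (p : ℝ) (hp : 2 < p) (w : EE n → ℝ) (hwc : HasCompactSupport w)
    (h : Integrable (fun x => ‖gradient w x‖ ^ p)) : Integrable (gradient w) := by
  have h1 : Integrable ((tsupport w).indicator (fun _ => (1:ℝ))) :=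
    (integrable_indicator_iff (isClosed_tsupport w).measurableSet).2 (integrableOn_const hwc.measure_lt_top.ne)
  refine (h1.add h).mono' (meas_grad w).aestronglyMeasurable (Eventually.of_forall fun x => ?_)
  simp only [Pi.add_apply]
  by_cases hx : x ∈ tsupport w
  · simp only [hx, indicator_of_mem]
    have h0 : 0 ≤ ‖gradient w x‖ ^ p := by positivity
    rcases le_total ‖gradient w x‖ 1 with h | h
    · linarith
    · have := Real.rpow_le_rpow_of_exponent_le h (by linarith : (1:ℝ) ≤ p)
      rw [Real.rpow_one] at this
      linarith
  · rw [grad_zero w x hx]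
    simp [hx]
    positivity

lemma compare_fund {n : ℕ} (i : Fin n) (p : ℝ) (hp : 2 < p) (hpn : p < n) (u : EE n → ℝ) (hu : Differentiable ℝ u)
    (heq : ∀ φ : EE n → ℝ, ContDiff ℝ (⊤ : ℕ∞) φ →
          tsupport φ ⊆ ball (0 : EE n) 5 →
          ∫ x in ball (0 : EE n) 5,
            ‖gradient u x‖ ^ (p - 2) * ⟪gradient u x, gradient φ x⟫ = 0)
    (hpos : ∀ x ∈ ball (0 : EE n) 5, 0 < u x) (z : EE n) (r : ℝ) (hz : ‖z‖ ≤ 2) (hr : 0 < r)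
    (κ : ℝ) (hκ : κ = (n - p) / (p - 1)) (A0 : ℝ) (hA0 : 0 < A0)
    (hbd : ∀ x ∈ closedBall z r, A0 * ((r/2) ^ (-κ) - 3 ^ (-κ)) ≤ u x) (y : EE n) (hy : ‖y - z‖ < 3)
    (hyr : r < ‖y - z‖) :
    A0 * (‖y - z‖ ^ (-κ) - 3 ^ (-κ)) ≤ u y := by
  have hκ0 : 0 < κ := by rw [hκ]; exact div_pos (by linarith) (by linarith)
  by_contra hcon
  push Not at hcon
  set v : EE n → ℝ := fun x => A0 * (‖x - z‖ ^ (-κ) - 3 ^ (-κ)) with hv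
  set V : EE n → ℝ := fun x => A0 * ((max ‖x - z‖ (r/2)) ^ (-κ) - 3 ^ (-κ)) with hV
  have hVc : Continuous V := by
    have : Continuous fun x : EE n => (max ‖x - z‖ (r/2)) ^ (-κ) :=
      Continuous.rpow_const (by fun_prop) (fun x => Or.inl (by positivity))
    exact continuous_const.mul (this.sub continuous_const)
  have hVv : ∀ x, r < ‖x - z‖ → V x = v x := by
    intro x hx
    simp only [hV, hv]
    rw [max_eq_left (by linarith)]
  have hVle : ∀ x, V x ≤ A0 * ((r/2) ^ (-κ) - 3 ^ (-κ)) := by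
    intro x
    have := Real.rpow_le_rpow_of_nonpos (by positivity : 0 < r/2) (le_max_right ‖x - z‖ (r/2)) (by linarith : -κ ≤ 0)
    simp only [hV]
    gcongr
  have hV3 : ∀ x, 3 ≤ ‖x - z‖ → V x ≤ 0 := by
    intro x hx
    have := Real.rpow_le_rpow_of_nonpos (by norm_num : (0:ℝ) < 3) (hx.trans (le_max_left ‖x - z‖ (r/2))) (by linarith : -κ ≤ 0)
    simp only [hV]
    apply mul_nonpos_of_nonneg_of_nonpos hA0.le
    linarith
  have hu5 : ∀ x ∈ closedBall (0 : EE n) 5, 0 ≤ u x := by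
    intro x hx
    rw [← closure_ball _ (by norm_num)] at hx
    exact closure_minimal (fun x hx => (hpos x hx).le : ball (0 : EE n) 5 ⊆ {x | 0 ≤ u x})
      (isClosed_le continuous_const hu.continuous) hx
  have hnx : ∀ x, ‖x‖ ≤ ‖x - z‖ + 2 := fun x => by
    have := norm_add_le (x - z) z
    rw [sub_add_cancel] at this; linarith
  obtain ⟨ε, hε⟩ : ∃ ε, ε = (v y - u y) / 2 := ⟨_, rfl⟩
  have hcon' : 0 < v y - u y := sub_pos.2 hcon
  have hε0 : 0 < ε := by rw [hε]; linarith
  set K : Set (EE n) := closedBall z 3 ∩ {x | ε ≤ V x - u x} with hK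
  have hKc : IsCompact K := (isCompact_closedBall z 3).inter_right
    (isClosed_le continuous_const (hVc.sub hu.continuous))
  have hKr : ∀ x ∈ K, r < ‖x - z‖ := by
    rintro x ⟨-, hx⟩
    by_contra h
    have h1 := hbd x (by rw [mem_closedBall, dist_eq_norm]; linarith)
    have h2 := hVle x
    have h3 : ε ≤ V x - u x := hx
    linarith
  have hK3 : ∀ x ∈ K, ‖x - z‖ < 3 := by
    rintro x ⟨hx3, hx⟩
    by_contra h
    rw [mem_closedBall, dist_eq_norm] at hx3
    have h1 := hV3 x (not_lt.1 h)
    have h2 := hu5 x (by rw [mem_closedBall, dist_zero_right]; linarith [hnx x])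
    have h3 : ε ≤ V x - u x := hx
    linarith
  have hK5 : K ⊆ ball 0 5 := by
    intro x hx
    rw [mem_ball, dist_zero_right]; linarith [hnx x, hK3 x hx]
  set w : EE n → ℝ := (ball z 3).indicator (fun x => TT ε (V x - u x)) with hw
  have hwK0 : ∀ x, x ∉ K → w x = 0 := by
    intro x hx
    by_cases hxb : x ∈ ball z 3
    · simp only [hw, hxb, indicator_of_mem]
      apply TT_zero hε0
      by_contra h
      exact hx ⟨ball_subset_closedBall hxb, (not_le.1 h).le⟩
    · simp [hw, hxb]
  have hwK : tsupport w ⊆ K := by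
    apply closure_minimal _ hKc.isClosed
    intro x hx; by_contra h; exact hx (hwK0 x h)
  have hwc : HasCompactSupport w := hKc.of_isClosed_subset (isClosed_tsupport _) hwK
  have hvd : ∀ x, x ≠ z → HasFDerivAt v (A0 • ((-κ * ‖x - z‖ ^ (-κ - 2)) • innerSL ℝ (x - z))) x := by
    intro x hx
    exact ((norm_rpow_deriv z x (-κ) hx).sub_const _).const_mul A0
  have hKz : ∀ x ∈ K, x ≠ z := by
    rintro x hx rfl
    have := hKr x hx; simp at this; linarith
  have hwd : ∀ x ∈ K, HasFDerivAt w (Tp ε (v x - u x) • (fderiv ℝ v x - fderiv ℝ u x)) x := by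
    intro x hx
    have h1 := (TT_deriv ε (v x - u x)).comp_hasFDerivAt x
      ((hvd x (hKz x hx)).differentiableAt.hasFDerivAt.sub (hu x).hasFDerivAt)
    refine h1.congr_of_eventuallyEq ?_
    have o1 : ∀ᶠ x' in 𝓝 x, r < ‖x' - z‖ :=
      (by fun_prop : Continuous fun x' : EE n => ‖x' - z‖).continuousAt.eventually (lt_mem_nhds (hKr x hx))
    have o2 : ∀ᶠ x' in 𝓝 x, ‖x' - z‖ < 3 :=
      (by fun_prop : Continuous fun x' : EE n => ‖x' - z‖).continuousAt.eventually (gt_mem_nhds (hK3 x hx))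
    filter_upwards [o1, o2] with x' h1 h2
    have : x' ∈ ball z 3 := by rwa [mem_ball, dist_eq_norm]
    simp [hw, this, hVv x' h1]
  have hwd' : Differentiable ℝ w := by
    intro x
    by_cases hx : x ∈ K
    · exact (hwd x hx).differentiableAt
    · have : w =ᶠ[𝓝 x] fun _ => 0 := by
        filter_upwards [hKc.isClosed.isOpen_compl.mem_nhds hx] with x' hx'
        exact hwK0 x' hx'
      exact (differentiableAt_const _).congr_of_eventuallyEq this
  have hgv : ∀ x, x ≠ z → gradient v x = (-(A0 * κ) * ‖x - z‖ ^ (-κ - 2)) • (x - z) := by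
    intro x hx
    apply ext_inner_left ℝ
    intro a
    rw [grad_inner, (hvd x hx).fderiv, inner_smul_right]
    simp only [ContinuousLinearMap.smul_apply, innerSL_apply_apply, smul_eq_mul]
    rw [real_inner_comm]
    ring
  have hgvn : ∀ x, x ≠ z → ‖gradient v x‖ = (A0 * κ) * ‖x - z‖ ^ (-κ - 1) := by
    intro x hx
    have h0 : 0 < ‖x - z‖ := norm_pos_iff.2 (sub_ne_zero.2 hx)
    rw [hgv x hx, norm_smul, neg_mul, norm_neg, Real.norm_of_nonneg (by positivity), mul_assoc,
      ← Real.rpow_add_one h0.ne']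
    congr 2; ring
  have hFv : ∀ x, x ≠ z → ‖gradient v x‖ ^ (p - 2) • gradient v x =
      (-(A0 * κ) ^ (p - 1) * ‖x - z‖ ^ (-(n:ℝ))) • (x - z) := by
    intro x hx
    have h0 : 0 < ‖x - z‖ := norm_pos_iff.2 (sub_ne_zero.2 hx)
    rw [hgvn x hx, hgv x hx, smul_smul]
    congr 1
    rw [Real.mul_rpow (by positivity) (by positivity), ← Real.rpow_mul h0.le]
    have e1 : (A0 * κ) ^ (p - 1) = (A0 * κ) ^ (p - 2) * (A0 * κ) := (pow_id hp (by positivity)).symm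
    have e2 : ‖x - z‖ ^ (-(n:ℝ)) = ‖x - z‖ ^ ((-κ - 1) * (p - 2)) * ‖x - z‖ ^ (-κ - 2) := by
      rw [← Real.rpow_add h0]
      congr 1
      have : κ * (p - 1) = n - p := by rw [hκ]; exact div_mul_cancel₀ _ (by linarith)
      linarith
    rw [e1, e2]; ring
  have hgw : ∀ x ∈ K, gradient w x = Tp ε (v x - u x) • (gradient v x - gradient u x) := by
    intro x hx
    simp only [gradient, (hwd x hx).fderiv, map_sub, map_smul]
  have hgw0 : ∀ x, x ∉ K → gradient w x = 0 := fun x hx => grad_zero w x (fun h => hx (hwK h))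
  obtain ⟨hwp, hI1, hI2⟩ := weak2 p hp u heq w hwd' hwc (hwK.trans hK5)
    ((hwK.trans hK5).trans (Good_univ p hp u hu heq)) ((A0 * κ) * r ^ (-κ - 1)) (by positivity) (by
      intro x hx
      have hxK := hwK hx
      rw [hgw x hxK, norm_smul, Real.norm_of_nonneg (Tp_nonneg _ _)]
      calc _ ≤ 1 * (‖gradient v x‖ + ‖gradient u x‖) := by
            gcongr
            · exact Tp_le _ _
            · exact norm_sub_le _ _
        _ ≤ _ := by
            rw [one_mul, hgvn x (hKz x hxK)]
            have := Real.rpow_le_rpow_of_nonpos hr (hKr x hxK).le (by linarith : -κ - 1 ≤ 0)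
            gcongr)
  have hwi := grad_int p hp w hwc hwp
  obtain ⟨hJ1, hJ2⟩ := div_free z w hwd' hwc (fun h => hKz z (hwK h) rfl) hwi
  set H : EE n → ℝ := fun x => -(A0 * κ) ^ (p - 1) * (‖x - z‖ ^ (-(n:ℝ)) * ⟪x - z, gradient w x⟫) -
    ‖gradient u x‖ ^ (p - 2) * ⟪gradient u x, gradient w x⟫ with hH
  have hHK : ∀ x ∈ K, H x = Tp ε (v x - u x) * ⟪‖gradient v x‖ ^ (p - 2) • gradient v x -
      ‖gradient u x‖ ^ (p - 2) • gradient u x, gradient v x - gradient u x⟫ := by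
    intro x hx
    rw [hFv x (hKz x hx), inner_sub_left, inner_smul_left, inner_smul_left]
    simp only [hH]
    rw [hgw x hx, inner_smul_right, inner_smul_right]
    simp only [conj_trivial]
    ring
  have hH0 : ∀ x, x ∉ K → H x = 0 := by
    intro x hx; simp only [hH]; rw [hgw0 x hx]; simp only [inner_zero_right, mul_zero, sub_zero]
  have hHnn : 0 ≤ H := by
    intro x
    by_cases hx : x ∈ K
    · rw [hHK x hx]
      exact mul_nonneg (Tp_nonneg _ _) (mono_ineq (p - 2) (by linarith) _ _).1
    · rw [hH0 x hx]; simp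
  have hHi : Integrable H := (hJ1.const_mul _).sub hI1
  have hHint : ∫ x, H x = 0 := by
    simp only [hH]
    rw [integral_sub (hJ1.const_mul _) hI1, integral_const_mul, hJ2, hI2]; simp
  have hae : ∀ᵐ x, gradient w x = 0 := by
    filter_upwards [(integral_eq_zero_iff_of_nonneg hHnn hHi).1 hHint] with x hx
    by_cases hxK : x ∈ K
    · rw [hHK x hxK, Pi.zero_apply] at hx
      rw [hgw x hxK]
      rcases mul_eq_zero.1 hx with h | h
      · rw [h, zero_smul]
      · rw [(mono_ineq (p - 2) (by linarith) _ _).2 h]; simp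
    · exact hgw0 x hxK
  obtain ⟨-, -, hB⟩ := ibp_cpt w (fun x => x i) (fun _ => 1) (EuclideanSpace.single i 1) hwd' hwc hwi
    (fun x _ => (EuclideanSpace.proj i : EE n →L[ℝ] ℝ).differentiableAt)
    (fun x _ => by
      have h : HasFDerivAt (fun x : EE n => x i) (EuclideanSpace.proj i : EE n →L[ℝ] ℝ) x :=
        (EuclideanSpace.proj i : EE n →L[ℝ] ℝ).hasFDerivAt
      rw [h.fderiv]
      simp) continuousOn_const
  have hB0 : ∫ x : EE n, x i * fderiv ℝ w x (EuclideanSpace.single i 1) = 0 := by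
    apply integral_eq_zero_of_ae
    filter_upwards [hae] with x hx
    rw [← grad_inner, hx]; simp
  rw [hB0] at hB
  simp only [one_mul] at hB
  have hwnn : 0 ≤ w := by
    intro x
    exact indicator_nonneg (fun x _ => TT_nonneg hε0 _) x
  have hwy : w y ≠ 0 := by
    have : y ∈ ball z 3 := by rwa [mem_ball, dist_eq_norm]
    simp only [hw, this, indicator_of_mem, hVv y hyr]
    exact (TT_pos hε0 (by rw [hε]; linarith)).ne'
  have := hwd'.continuous.integral_pos_of_hasCompactSupport_nonneg_nonzero (μ := volume) hwc hwnn hwy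
  linarith


end Helpers


theorem stmt8 (n : ℕ) (hn : 3 ≤ n) (p : ℝ) (hp2 : 2 < p) (hpn : p < n) :
    ∃ c : ℝ, 0 < c ∧
      ∀ u : EuclideanSpace ℝ (Fin n) → ℝ,
        ContinuousOn u (ball (0 : EuclideanSpace ℝ (Fin n)) 5) →
        Differentiable ℝ u →
        (∀ φ : EuclideanSpace ℝ (Fin n) → ℝ, ContDiff ℝ (⊤ : ℕ∞) φ →
          tsupport φ ⊆ ball (0 : EuclideanSpace ℝ (Fin n)) 5 →
          ∫ x in ball (0 : EuclideanSpace ℝ (Fin n)) 5,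
            ‖gradient u x‖ ^ (p - 2) * ⟪gradient u x, gradient φ x⟫ = 0) →
        (∀ x ∈ ball (0 : EuclideanSpace ℝ (Fin n)) 5, 0 < u x) →
        u 0 = 1 →
        ∀ (z : EuclideanSpace ℝ (Fin n)) (r : ℝ), ‖z‖ ≤ 2 → 0 < r → r ≤ 1 →
          (0 : EuclideanSpace ℝ (Fin n)) ∉ closure (ball z r) →
          sInf (u '' ball z r) ≤ c * r ^ (-((n - p) / (p - 1))) := by
  obtain ⟨κ, hκ⟩ : ∃ κ, κ = (n - p) / (p - 1) := ⟨_, rfl⟩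
  rw [← hκ]
  have hκ0 : 0 < κ := by rw [hκ]; exact div_pos (by linarith) (by linarith)
  have h23 : (0:ℝ) < 2 ^ (-κ) - 3 ^ (-κ) :=
    sub_pos.2 (Real.rpow_lt_rpow_of_neg (by norm_num) (by norm_num) (by linarith))
  obtain ⟨A0, hA0⟩ : ∃ A0 : ℝ, A0 = 2 / (2 ^ (-κ) - 3 ^ (-κ)) := ⟨_, rfl⟩
  have hA0p : 0 < A0 := by rw [hA0]; positivity
  refine ⟨A0 * 2 ^ κ, by positivity, ?_⟩
  intro u _ hu heq hpos hu0 z r hz hr hr1 h0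
  rw [closure_ball z hr.ne', mem_closedBall, dist_zero_left, not_le] at h0
  by_contra hcon
  push Not at hcon
  have hm : A0 * 2 ^ κ * r ^ (-κ) = A0 * (r / 2) ^ (-κ) := by
    rw [Real.div_rpow hr.le (by norm_num), Real.rpow_neg (by norm_num : (0:ℝ) ≤ 2), div_inv_eq_mul]; ring
  rw [hm] at hcon
  have hzr : ball z r ⊆ ball 0 5 := by
    intro x hx
    rw [mem_ball, dist_eq_norm] at hx
    have := norm_add_le (x - z) z
    rw [sub_add_cancel] at this
    rw [mem_ball, dist_zero_right]; linarith
  have hb : BddBelow (u '' ball z r) := ⟨0, by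
    rintro _ ⟨x, hx, rfl⟩; exact (hpos x (hzr hx)).le⟩
  have h1 : ∀ x ∈ closedBall z r, A0 * (r / 2) ^ (-κ) ≤ u x := by
    intro x hx
    rw [← closure_ball z hr.ne'] at hx
    exact closure_minimal (fun x hx => hcon.le.trans (csInf_le hb (mem_image_of_mem u hx)) :
      ball z r ⊆ {x | A0 * (r / 2) ^ (-κ) ≤ u x}) (isClosed_le continuous_const hu.continuous) hx
  have h3 : (0:ℝ) < 3 ^ (-κ) := by positivity
  have h2 := compare_fund ⟨0, by omega⟩ p hp2 hpn u hu heq hpos z r hz hr κ hκ A0 hA0p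
    (fun x hx => by
      have := h1 x hx
      nlinarith) 0 (by rw [zero_sub, norm_neg]; linarith) (by rwa [zero_sub, norm_neg])
  rw [hu0, zero_sub, norm_neg] at h2
  have h4 : (2:ℝ) ^ (-κ) ≤ ‖z‖ ^ (-κ) :=
    Real.rpow_le_rpow_of_nonpos (by linarith) hz (by linarith)
  have h5 : A0 * (2 ^ (-κ) - 3 ^ (-κ)) = 2 := by rw [hA0]; field_simp
  have h6 : A0 * (2 ^ (-κ) - 3 ^ (-κ)) ≤ A0 * (‖z‖ ^ (-κ) - 3 ^ (-κ)) := by gcongr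
  linarith
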